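/- For every integer n ≥ 1, every nonnegative integer p, every λ ∈ {-1, 0}, every real α with 0 ≤ α < 1 when λ = 0 (and α ≥ 0 when λ = -1), and every x ∈ I, the first central moment of the generalized operator satisfies L_n^{(α)}(t - x; x) := Σ_k w_{n,k}^{(α)}(x)·(k/n - x) = x·(p + n(λ+1)α)/(n(1-(λ+1)α)). -/

import Mathlib

/-!
The weights are those of a Pólya–Eggenberger urn with success parameter `x`. The claim follows from
`∑ w = 1` together with the first moment `∑ k w`, which is `N x` for `λ = -1` and `N x / (1 - α)`
for `λ = 0`, where `N = n + p`.

For `λ = -1` both sums are finite. `rise_vandermonde` is the Vandermonde identity for rising products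
with step `α`; `rise_moment` is its first-moment analogue. Both are proved by induction through
Pascal's rule.

For `λ = 0` the weights `urn α x M` (with `N = M + 1`) satisfy two telescoping identities: `k w_k`
times a linear factor telescopes the first moment (`urn_moment_partial`), and
`k · urn M k / (M + 1)` telescopes the difference of the total masses for `M + 1` and `M`
(`urn_mass_partial`). In each case the boundary term converges, and it equals a summable sequence
times a function `A + B k`, so its limit vanishes because the harmonic series diverges
(`limit_eq_zero`). This yields total mass `1` by induction on `M`, and then the mean; `α < 1` is
used to bound the partial sums of `k w_k`.
-/

/-- The weights `w_{n,k}^{(α)}(x)` of the generalized positive linear operator,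
for the parameter `lam`(= λ) which is `-1` or `0`.  Empty products equal `1`;
for `lam = -1` and `k > n + p` the binomial coefficient vanishes, so these
weights vanish and summing over all `k : ℕ` is the same as summing over
`0 ≤ k ≤ n + p`. -/
noncomputable def w (n p : ℕ) (lam : ℤ) (α x : ℝ) (k : ℕ) : ℝ :=
  (((n : ℝ) + p) / ((n : ℝ) + p + ((lam : ℝ) + 1) * k)) *
    (Nat.choose ((n : ℤ) + p + (lam + 1) * k).toNat k : ℝ) *
    (∏ i ∈ Finset.range k, (x + (i : ℝ) * α)) *
    (∏ i ∈ Finset.range ((n : ℤ) + p + lam * k).toNat,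
        (1 + (lam : ℝ) * x + (i : ℝ) * α)) /
    (∏ i ∈ Finset.range ((n : ℤ) + p + (lam + 1) * k).toNat,
        (1 + ((lam : ℝ) + 1) * x + (i : ℝ) * α))

/-- The interval `I`: `[0,1]` when `λ = -1` and `[0,∞)` when `λ = 0`. -/
noncomputable def Iset (lam : ℤ) : Set ℝ :=
  if lam = -1 then Set.Icc (0 : ℝ) 1 else Set.Ici (0 : ℝ)

open Finset Filter Topology

/-- The rising product `∏_{i<k} (x + iα)`. -/
noncomputable def rise (α x : ℝ) (k : ℕ) : ℝ := ∏ i ∈ range k, (x + (i : ℝ) * α)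

lemma rise_succ (α x : ℝ) (k : ℕ) : rise α x (k + 1) = rise α x k * (x + k * α) :=
  prod_range_succ _ _

lemma rise_zero (α x : ℝ) : rise α x 0 = 1 := prod_range_zero _

lemma rise_nonneg {α x : ℝ} (hα : 0 ≤ α) (hx : 0 ≤ x) (k : ℕ) : 0 ≤ rise α x k :=
  prod_nonneg fun _ _ => by positivity

lemma rise_pos {α x : ℝ} (hα : 0 ≤ α) (hx : 0 < x) (k : ℕ) : 0 < rise α x k :=
  prod_pos fun _ _ => by positivity

/-! ### The finite case `λ = -1` -/

lemma rise_vandermonde (α x y : ℝ) (N : ℕ) :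
    ∑ ij ∈ antidiagonal N, (N.choose ij.1 : ℝ) * (rise α x ij.1 * rise α y ij.2)
      = rise α (x + y) N := by
  induction N with
  | zero => simp [rise_zero]
  | succ N ih =>
    rw [sum_antidiagonal_choose_succ_mul (fun i j => rise α x i * rise α y j), rise_succ, ← ih,
      sum_mul, ← sum_add_distrib]
    refine sum_congr rfl fun ij hij => ?_
    rw [HasAntidiagonal.mem_antidiagonal] at hij
    rw [← Nat.choose_symm_of_eq_add hij.symm, rise_succ, rise_succ, ← hij]
    push_cast
    ring

/-- The first moment, multiplied by `x + y` to avoid a division. -/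
lemma rise_moment (α x y : ℝ) (N : ℕ) :
    (x + y) * ∑ ij ∈ antidiagonal N,
        (N.choose ij.1 : ℝ) * (ij.1 * (rise α x ij.1 * rise α y ij.2))
      = N * x * rise α (x + y) N := by
  induction N with
  | zero => simp
  | succ N ih =>
    have key : ∑ ij ∈ antidiagonal (N + 1),
          ((N + 1).choose ij.1 : ℝ) * (ij.1 * (rise α x ij.1 * rise α y ij.2))
        = (x + y + (N + 1) * α) * (∑ ij ∈ antidiagonal N,
            (N.choose ij.1 : ℝ) * (ij.1 * (rise α x ij.1 * rise α y ij.2)))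
          + x * rise α (x + y) N := by
      rw [sum_antidiagonal_choose_succ_mul
        (fun i j => (i : ℝ) * (rise α x i * rise α y j)), ← rise_vandermonde α x y N,
        mul_sum, mul_sum, ← sum_add_distrib, ← sum_add_distrib]
      refine sum_congr rfl fun ij hij => ?_
      rw [HasAntidiagonal.mem_antidiagonal] at hij
      rw [← Nat.choose_symm_of_eq_add hij.symm, rise_succ, rise_succ, ← hij]
      push_cast
      ring
    rw [key, rise_succ]
    push_cast
    linear_combination (x + y + (N + 1) * α) * ih

/-! ### The infinite case `λ = 0` -/

/-- A nonnegative summable sequence cannot be asymptotically `L / (A + B k)` with `L > 0`, by divergence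
of the harmonic series. -/
lemma limit_eq_zero {a : ℕ → ℝ} {A B L : ℝ} (hA : 0 ≤ A) (hB : 0 ≤ B) (ha : ∀ k, 0 ≤ a k)
    (hs : Summable a) (hL : Tendsto (fun k : ℕ => a k * (A + B * k)) atTop (𝓝 L)) : L = 0 := by
  have hL0 : 0 ≤ L := ge_of_tendsto' hL fun k => mul_nonneg (ha k) (by positivity)
  by_contra hne
  have hpos : 0 < L := lt_of_le_of_ne hL0 (Ne.symm hne)
  have hev : ∀ᶠ k : ℕ in atTop, L / 2 < a k * (A + B * k) :=
    hL.eventually (lt_mem_nhds (by linarith))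
  have hC : 0 < L / 2 / (A + B + 1) := by positivity
  have hharm : Summable fun k : ℕ => (L / 2 / (A + B + 1)) * (k : ℝ)⁻¹ := by
    refine hs.of_norm_bounded_eventually_nat ?_
    filter_upwards [hev, eventually_ge_atTop 1] with k hk hk1
    have hk1' : (1 : ℝ) ≤ k := by exact_mod_cast hk1
    rw [Real.norm_of_nonneg (by positivity), ← div_eq_mul_inv, div_div, div_le_iff₀ (by positivity)]
    refine hk.le.trans (mul_le_mul_of_nonneg_left ?_ (ha k))
    nlinarith
  exact Real.not_summable_natCast_inv ((summable_mul_left_iff hC.ne').mp hharm)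

/-- The weights for `λ = 0` and `n + p = M + 1`, with the factor `(M + 1) / (M + 1 + k)` absorbed
into the binomial coefficient. -/
noncomputable def urn (α x : ℝ) (M k : ℕ) : ℝ :=
  ((M + k).choose k : ℝ) * rise α x k * rise α 1 (M + 1) / rise α (1 + x) (M + 1 + k)

section
variable {α x : ℝ}

lemma urn_nonneg (hα : 0 ≤ α) (hx : 0 ≤ x) (M k : ℕ) : 0 ≤ urn α x M k :=
  div_nonneg (mul_nonneg (mul_nonneg (Nat.cast_nonneg _) (rise_nonneg hα hx k))
    (rise_nonneg hα zero_le_one _)) (rise_nonneg hα (by linarith) _)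

lemma urn_succ_right (hα : 0 ≤ α) (hx : 0 ≤ x) (M k : ℕ) :
    (k + 1) * urn α x M (k + 1) * (1 + x + (M + 1 + k) * α)
      = (M + 1 + k) * (x + k * α) * urn α x M k := by
  have h1 : rise α (1 + x) (M + 1 + k) ≠ 0 := (rise_pos hα (by linarith) _).ne'
  have h2 : (1 + x + (M + 1 + k) * α) ≠ 0 := by positivity
  have hc : ((M + (k + 1)).choose (k + 1) : ℝ) * (k + 1) = (M + 1 + k) * (M + k).choose k := by
    have := Nat.add_one_mul_choose_eq (M + k) k
    have h' : ((M + k + 1 : ℕ) : ℝ) * (M + k).choose k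
      = (M + k + 1).choose (k + 1) * ((k + 1 : ℕ) : ℝ) := by exact_mod_cast this
    push_cast at h'
    rw [← add_assoc]
    linarith
  unfold urn
  rw [rise_succ α x k, ← add_assoc (M + 1) k 1, rise_succ α (1 + x)]
  push_cast
  field_simp
  linear_combination (rise α x k * rise α 1 (M + 1) * (x + k * α)) * hc

lemma urn_succ_left (hα : 0 ≤ α) (hx : 0 ≤ x) (M k : ℕ) :
    (M + 1) * urn α x (M + 1) k * (1 + x + (M + 1 + k) * α)
      = (M + 1 + k) * (1 + (M + 1) * α) * urn α x M k := by
  have h1 : rise α (1 + x) (M + 1 + k) ≠ 0 := (rise_pos hα (by linarith) _).ne'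
  have h2 : (1 + x + (M + 1 + k) * α) ≠ 0 := by positivity
  have hc : ((M + 1 + k).choose k : ℝ) * (M + 1) = (M + 1 + k) * (M + k).choose k := by
    have := Nat.choose_mul_succ_eq (M + k) k
    have e : M + k + 1 - k = M + 1 := by omega
    rw [e] at this
    have h' : ((M + k).choose k : ℝ) * ((M + k + 1 : ℕ) : ℝ)
      = (M + k + 1).choose k * ((M + 1 : ℕ) : ℝ) := by exact_mod_cast this
    push_cast at h'
    rw [add_right_comm M 1 k]
    linarith
  unfold urn
  rw [rise_succ α 1 (M + 1), add_right_comm (M + 1) 1 k, rise_succ α (1 + x)]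
  push_cast
  field_simp
  linear_combination (rise α x k * rise α 1 (M + 1)) * hc

/-- Relates the boundary term of `urn_mass_partial` to the weights for `M + 1`. -/
lemma urn_boundary (hα : 0 ≤ α) (hx : 0 ≤ x) (M k : ℕ) :
    (k + 1) * urn α x M (k + 1) * (1 + (M + 1) * α)
      = (M + 1) * (x + k * α) * urn α x (M + 1) k := by
  have h2 : (1 + x + (M + 1 + k) * α) ≠ 0 := by positivity
  apply mul_right_cancel₀ h2
  linear_combination (1 + (M + 1) * α) * urn_succ_right hα hx M k
    - (x + k * α) * urn_succ_left hα hx M k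

lemma urn_mass_partial (hα : 0 ≤ α) (hx : 0 ≤ x) (M K : ℕ) :
    ∑ k ∈ range K, urn α x (M + 1) k
      = ∑ k ∈ range K, urn α x M k - K * urn α x M K / (M + 1) := by
  induction K with
  | zero => simp
  | succ K ih =>
    rw [sum_range_succ, sum_range_succ, ih]
    have h2 : (1 + x + (M + 1 + K) * α) ≠ 0 := by positivity
    have hM : (M + 1 : ℝ) ≠ 0 := by positivity
    have e : (M + 1 : ℝ) * urn α x (M + 1) K
        = (M + 1 + K) * urn α x M K - (K + 1) * urn α x M (K + 1) := by
      apply mul_right_cancel₀ h2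
      linear_combination urn_succ_left hα hx M K + urn_succ_right hα hx M K
    push_cast
    field_simp
    linear_combination e

lemma urn_moment_partial (hα : 0 ≤ α) (hx : 0 ≤ x) (M K : ℕ) :
    ∑ k ∈ range K, urn α x M k * ((M + 1) * x - k * (1 - α))
      = K * urn α x M K * (1 + x + (M + K) * α) := by
  induction K with
  | zero => simp
  | succ K ih =>
    rw [sum_range_succ, ih]
    push_cast
    linear_combination -urn_succ_right hα hx M K

lemma urn_zero_partial (hα : 0 ≤ α) (hx : 0 ≤ x) (K : ℕ) :
    ∑ k ∈ range K, urn α x 0 k = 1 - rise α x K / rise α (1 + x) K := by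
  induction K with
  | zero => simp [rise_zero]
  | succ K ih =>
    have h1 : rise α (1 + x) K ≠ 0 := (rise_pos hα (by linarith) _).ne'
    have h2 : (1 + x + K * α) ≠ 0 := by positivity
    rw [sum_range_succ, ih, rise_succ, rise_succ]
    simp only [urn, zero_add, Nat.choose_self, Nat.cast_one, one_mul, add_comm 1 K, rise_succ,
      rise_zero, Nat.cast_zero, zero_mul, add_zero, mul_one]
    field_simp
    ring

/-- If the partial sums of nonnegative `a` are `S K - b K` with `S → 1`, `b ≥ 0`, and `b (k + 1)`
is `a k` times a nonnegative affine function of `k`, then `b → 0`, so `a` has sum `1`. -/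
lemma hasSum_one_of_boundary {a b S : ℕ → ℝ} {A B : ℝ} (hA : 0 ≤ A) (hB : 0 ≤ B)
    (ha : ∀ k, 0 ≤ a k) (hb : ∀ k, 0 ≤ b k) (hS : Tendsto S atTop (𝓝 1)) (hS1 : ∀ k, S k ≤ 1)
    (hsum : ∀ K, ∑ k ∈ range K, a k = S K - b K) (hab : ∀ k, b (k + 1) = a k * (A + B * k)) :
    HasSum a 1 := by
  have hs : Summable a := summable_of_sum_range_le ha (c := 1) fun K => by
    rw [hsum]; linarith [hb K, hS1 K]
  have ht := hs.hasSum.tendsto_sum_nat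
  have hbt : Tendsto b atTop (𝓝 (1 - ∑' k, a k)) :=
    (hS.sub ht).congr fun K => by rw [hsum]; ring
  have h0 := limit_eq_zero hA hB ha hs
    (((tendsto_add_atTop_iff_nat 1).mpr hbt).congr hab)
  have h1 : ∑' k, a k = 1 := by linarith
  exact h1 ▸ hs.hasSum

lemma urn_hasSum (hα : 0 ≤ α) (hx : 0 ≤ x) (M : ℕ) : HasSum (urn α x M) 1 := by
  induction M with
  | zero =>
    refine hasSum_one_of_boundary (b := fun K => rise α x K / rise α (1 + x) K)
      (S := fun _ => 1) hx hα (urn_nonneg hα hx 0)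
      (fun K => div_nonneg (rise_nonneg hα hx K) (rise_nonneg hα (by linarith) K))
      tendsto_const_nhds (fun _ => le_rfl) (urn_zero_partial hα hx) fun k => ?_
    simp only [urn, zero_add, Nat.choose_self, Nat.cast_one, one_mul, add_comm 1 k, rise_succ,
      rise_zero, Nat.cast_zero, zero_mul, add_zero, mul_one]
    ring
  | succ M ih =>
    have hc : (0 : ℝ) < 1 + (M + 1) * α := by positivity
    refine hasSum_one_of_boundary (A := x / (1 + (M + 1) * α)) (B := α / (1 + (M + 1) * α))
      (b := fun K => K * urn α x M K / (M + 1)) (S := fun K => ∑ k ∈ range K, urn α x M k)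
      (by positivity) (by positivity) (urn_nonneg hα hx _)
      (fun K => div_nonneg (mul_nonneg (Nat.cast_nonneg _) (urn_nonneg hα hx M K)) (by positivity))
      ih.tendsto_sum_nat (fun K => sum_le_hasSum _ (fun k _ => urn_nonneg hα hx M k) ih)
      (urn_mass_partial hα hx M) fun k => ?_
    have := urn_boundary hα hx M k
    push_cast
    field_simp
    linear_combination this

lemma urn_moment (hα : 0 ≤ α) (hα1 : α < 1) (hx : 0 ≤ x) (M : ℕ) :
    HasSum (fun k : ℕ => (k : ℝ) * urn α x M k) ((M + 1) * x / (1 - α)) := by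
  have h1α : 0 < 1 - α := by linarith
  have hmass := urn_hasSum hα hx M
  have hnn : ∀ k : ℕ, 0 ≤ (k : ℝ) * urn α x M k := fun k =>
    mul_nonneg (Nat.cast_nonneg _) (urn_nonneg hα hx M k)
  have hpart : ∀ K, (M + 1) * x * ∑ k ∈ range K, urn α x M k
      - (1 - α) * ∑ k ∈ range K, (k : ℝ) * urn α x M k
      = K * urn α x M K * ((1 + x + M * α) + α * K) := fun K => by
    have h := urn_moment_partial hα hx M K
    rw [mul_sum, mul_sum, ← sum_sub_distrib]
    rw [show (K : ℝ) * urn α x M K * ((1 + x + M * α) + α * K)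
      = K * urn α x M K * (1 + x + (M + K) * α) by ring, ← h]
    exact sum_congr rfl fun k _ => by ring
  have hs : Summable fun k : ℕ => (k : ℝ) * urn α x M k := by
    refine summable_of_sum_range_le hnn (c := (M + 1) * x / (1 - α)) fun K => ?_
    rw [le_div_iff₀ h1α]
    have h1 : ∑ k ∈ range K, urn α x M k ≤ 1 :=
      sum_le_hasSum _ (fun k _ => urn_nonneg hα hx M k) hmass
    have h2 : (M + 1) * x * ∑ k ∈ range K, urn α x M k ≤ (M + 1) * x :=
      mul_le_of_le_one_right (by positivity) h1
    have h3 : 0 ≤ K * urn α x M K * ((1 + x + M * α) + α * K) :=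
      mul_nonneg (hnn K) (by positivity)
    linarith [hpart K]
  have hlim := ((hmass.tendsto_sum_nat.const_mul ((M + 1) * x)).sub
    (hs.hasSum.tendsto_sum_nat.const_mul (1 - α))).congr hpart
  have h0 := limit_eq_zero (by positivity) hα hnn hs hlim
  have h1 : ∑' k : ℕ, (k : ℝ) * urn α x M k = (M + 1) * x / (1 - α) := by
    rw [eq_div_iff h1α.ne']; linarith
  exact h1 ▸ hs.hasSum

end

/-! ### The weights of the operator -/

lemma w_neg_one (n p : ℕ) (hn : 1 ≤ n) (α x : ℝ) (k : ℕ) :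
    w n p (-1) α x k = ((n + p).choose k : ℝ) * (rise α x k * rise α (1 - x) (n + p - k))
      / rise α 1 (n + p) := by
  have e1 : ((n : ℤ) + p + (-1 + 1) * k).toNat = n + p := by simp; omega
  have e2 : ((n : ℤ) + p + (-1) * k).toNat = n + p - k := by omega
  have h : ((n : ℝ) + p) ≠ 0 := by positivity
  have e3 : (1 : ℝ) + ((-1 : ℤ) : ℝ) * x = 1 - x := by push_cast; ring
  have e4 : (1 : ℝ) + (((-1 : ℤ) : ℝ) + 1) * x = 1 := by push_cast; ring
  have e5 : ((n : ℝ) + p) / (n + p + (((-1 : ℤ) : ℝ) + 1) * k) = 1 := by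
    push_cast; rw [neg_add_cancel, zero_mul, add_zero, div_self h]
  unfold w rise
  rw [e1, e2, e3, e4, e5]
  ring

lemma w_zero (n p M : ℕ) (hM : n + p = M + 1) (α x : ℝ) (k : ℕ) :
    w n p 0 α x k = urn α x M k := by
  have e1 : ((n : ℤ) + p + (0 + 1) * k).toNat = M + 1 + k := by omega
  have e2 : ((n : ℤ) + p + 0 * k).toNat = M + 1 := by omega
  have h : ((n : ℝ) + p) = M + 1 := by exact_mod_cast hM
  have e3 : (1 : ℝ) + ((0 : ℤ) : ℝ) * x = 1 := by push_cast; ring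
  have e4 : (1 : ℝ) + (((0 : ℤ) : ℝ) + 1) * x = 1 + x := by push_cast; ring
  have e5 : ((n : ℝ) + p) / (n + p + (((0 : ℤ) : ℝ) + 1) * k) * ((M + 1 + k).choose k : ℝ)
      = (M + k).choose k := by
    have hc := Nat.choose_mul_succ_eq (M + k) k
    have e : M + k + 1 - k = M + 1 := by omega
    rw [e, add_right_comm] at hc
    have h' : ((M + k).choose k : ℝ) * ((M + 1 + k : ℕ) : ℝ)
      = (M + 1 + k).choose k * ((M + 1 : ℕ) : ℝ) := by exact_mod_cast hc
    push_cast at h' ⊢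
    rw [h, zero_add, one_mul]
    have : (M + 1 + k : ℝ) ≠ 0 := by positivity
    field_simp
    linarith
  unfold w urn rise
  rw [e1, e2, e3, e4, e5]

/-- the first central moment of the generalized operator:
`L_n^{(α)}(t-x; x) = x(p + n(λ+1)α)/(n(1-(λ+1)α))`. -/
theorem first_central_moment (n p : ℕ) (hn : 1 ≤ n) (lam : ℤ) (hlam : lam = -1 ∨ lam = 0)
    (α : ℝ) (hα : 0 ≤ α) (hα1 : lam = 0 → α < 1) (x : ℝ) (hx : x ∈ Iset lam) :
    HasSum (fun k : ℕ => w n p lam α x k * ((k : ℝ) / n - x))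
      (x * ((p : ℝ) + (n : ℝ) * ((lam : ℝ) + 1) * α) / ((n : ℝ) * (1 - ((lam : ℝ) + 1) * α))) := by
  have hn0 : (n : ℝ) ≠ 0 := by positivity
  rcases hlam with rfl | rfl
  · have hR : rise α 1 (n + p) ≠ 0 := (rise_pos hα one_pos _).ne'
    have hmass := rise_vandermonde α x (1 - x) (n + p)
    have hmom := rise_moment α x (1 - x) (n + p)
    rw [add_sub_cancel] at hmass hmom
    rw [Nat.sum_antidiagonal_eq_sum_range_succ_mk] at hmass hmom
    have hz : ∀ k ∉ range (n + p).succ, w n p (-1) α x k * ((k : ℝ) / n - x) = 0 := fun k hk => by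
      rw [mem_range, not_lt] at hk
      rw [w_neg_one n p hn, Nat.choose_eq_zero_of_lt hk]
      simp
    have hsplit : ∑ k ∈ range (n + p).succ, w n p (-1) α x k * ((k : ℝ) / n - x)
        = (∑ k ∈ range (n + p).succ, ((n + p).choose k : ℝ)
            * (k * (rise α x k * rise α (1 - x) (n + p - k)))) * (1 / (n * rise α 1 (n + p)))
          - (∑ k ∈ range (n + p).succ, ((n + p).choose k : ℝ)
            * (rise α x k * rise α (1 - x) (n + p - k))) * (x / rise α 1 (n + p)) := by
      rw [sum_mul, sum_mul, ← sum_sub_distrib]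
      refine sum_congr rfl fun k _ => ?_
      rw [w_neg_one n p hn]
      field_simp
    rw [one_mul] at hmom
    have hsum := hasSum_sum_of_ne_finset_zero (L := SummationFilter.unconditional ℕ) hz
    rw [hsplit, hmass, hmom] at hsum
    convert hsum using 1
    push_cast
    field_simp
    ring
  · have hx0 : 0 ≤ x := by simpa [Iset] using hx
    have h1α : (1 - α) ≠ 0 := by linarith [hα1 rfl]
    obtain ⟨M, hM⟩ : ∃ M, n + p = M + 1 := ⟨n + p - 1, by omega⟩
    have hM' : (n : ℝ) + p = M + 1 := by exact_mod_cast hM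
    have hsum := ((urn_moment hα (hα1 rfl) hx0 M).mul_right (1 / (n : ℝ))).sub
      ((urn_hasSum hα hx0 M).mul_right x)
    rw [← hM'] at hsum
    have hval : x * ((p : ℝ) + (n : ℝ) * (((0 : ℤ) : ℝ) + 1) * α)
          / ((n : ℝ) * (1 - (((0 : ℤ) : ℝ) + 1) * α))
        = ((n : ℝ) + p) * x / (1 - α) * (1 / (n : ℝ)) - 1 * x := by
      push_cast
      rw [zero_add, one_mul, mul_one]
      field_simp
      ring
    rw [hval]
    have hfun : (fun k : ℕ => w n p 0 α x k * ((k : ℝ) / n - x))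
        = fun k : ℕ => (k : ℝ) * urn α x M k * (1 / (n : ℝ)) - urn α x M k * x := by
      funext k
      rw [w_zero n p M hM]
      ring
    rw [hfun]
    exact hsum
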